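/- Let n ≥ 11 with n ≡ 3 (mod 4), let ν = 2, c_W = c_R = (n+3)/2 (so that c := c_W + c_R − n = 3), and let h ≤ (n−3)/4. Then every (n, (n+3)/2, (n+3)/2, 2, h, 2^K, q) multi-version code with side information (for two independent K-bit versions) satisfies q² ≥ 2^K, i.e., its storage cost satisfies log₂ q ≥ K/2. -/

import Mathlib

open Finset

/-- The `h`-hop neighborhood `H_i = {i-h, …, i+h}` of server `i` on the ring `ZMod n`. -/
noncomputable def nbhd (n h : ℕ) (i : ZMod n) : Finset (ZMod n) :=
  (Finset.Icc (-(h : ℤ)) (h : ℤ)).image (fun d : ℤ => (i + (d : ZMod n)))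

/-- The set `A_S(u)` of servers that received version `u` in state `S`. -/
def received (n ν : ℕ) [NeZero n] (S : ZMod n → Finset (Fin ν)) (u : Fin ν) :
    Finset (ZMod n) :=
  Finset.univ.filter (fun j => u ∈ S j)

/-- An `(n, c_W, c_R, ν, h, 2^K, q)` multi-version code with side information.
Servers are indexed by `ZMod n`, versions by `Fin ν` (higher index = later version),
message values are `K`-bit strings `Fin K → Bool`, and stored symbols lie in `Fin q`.
The encoder of server `i` may depend only on the states of the servers in its
`h`-hop neighborhood and on the values of the versions that server `i` received;
the decoder for a set `T` of `c_R` servers may depend only on the symbols stored by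
the servers of `T`, and must return the value of some version at least as late as the
latest complete version whenever a complete version exists (and `NULL`, i.e. `none`,
otherwise). -/
structure MVCode (n cW cR ν h K q : ℕ) [NeZero n] where
  enc : ZMod n → (ZMod n → Finset (Fin ν)) → (Fin ν → (Fin K → Bool)) → Fin q
  dec : (ZMod n → Finset (Fin ν)) → Finset (ZMod n) → (ZMod n → Fin q) →
    Option (Fin K → Bool)
  enc_local_state : ∀ (i : ZMod n) (S S' : ZMod n → Finset (Fin ν))
      (W : Fin ν → Fin K → Bool),
    (∀ j ∈ nbhd n h i, S j = S' j) → enc i S W = enc i S' W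
  enc_local_word : ∀ (i : ZMod n) (S : ZMod n → Finset (Fin ν))
      (W W' : Fin ν → Fin K → Bool),
    (∀ u ∈ S i, W u = W' u) → enc i S W = enc i S W'
  dec_local : ∀ (S : ZMod n → Finset (Fin ν)) (T : Finset (ZMod n))
      (X X' : ZMod n → Fin q),
    (∀ j ∈ T, X j = X' j) → dec S T X = dec S T X'
  dec_correct : ∀ (S : ZMod n → Finset (Fin ν)) (W : Fin ν → Fin K → Bool)
      (T : Finset (ZMod n)), T.card = cR →
    (∃ u : Fin ν, cW ≤ (received n ν S u).card) →
    ∃ m : Fin ν, (∀ u : Fin ν, cW ≤ (received n ν S u).card → u ≤ m) ∧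
      dec S T (fun j => enc j S W) = some (W m)
  dec_null : ∀ (S : ZMod n → Finset (Fin ν)) (W : Fin ν → Fin K → Bool)
      (T : Finset (ZMod n)), T.card = cR →
    (∀ u : Fin ν, (received n ν S u).card < cW) →
    dec S T (fun j => enc j S W) = none

/-! The `cW - 1` servers of a set `F` outside the neighborhood of server `0` cannot tell apart the
state in which they hold both versions while server `0` holds only the first one, from the state in
which server `0` holds both as well; `A = {0} ∪ F` has `cW` elements. In the first state two servers
of `F` together with server `0` reveal one of the versions `w`, `v`; in the second, three servers of
`F` reveal `v`. If `q² < 2^K`, server `0` stores the same symbol for a set `C` of `q + 1` values of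
`w`, so for `w ∈ C` two servers of `F` alone reveal `w` or `v`.

To refute this, fix three servers of `F` and count, for each `w ∈ C`, the symbol triples used as `v`
varies, grouped by the symbol `a` of the first server. A value `v` decoded by both pairs of servers
with first symbol `a` consumes one symbol of each of the other two servers, while any other `v`
forces one of the two pairs to decode `w`. Summing over `C`, the symbol triples do not suffice,
provided that no symbol `a` is stored for much more than half of the inputs `(w, w)`, `w ∈ C`;
among any four servers of `F` one has this property. -/

section Arithmetic

theorem mul_add_sub_mul_le_max {R : Type*} [CommRing R] [LinearOrder R] [IsStrictOrderedRing R]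
    {c d u v : R} (hc : 0 ≤ c) (hu : 0 ≤ u) (hv : 0 ≤ v) (hud : u ≤ d) (hvd : v ≤ d) :
    c * (u + v) - u * v ≤ max (c * d) ((2 * c - d) * d) := by
  have hcorner : 0 ≤ (d - u) * (d - v) := mul_nonneg (sub_nonneg.2 hud) (sub_nonneg.2 hvd)
  rcases le_total d c with hdc | hcd
  · have : 0 ≤ (c - d) * ((d - u) + (d - v)) := mul_nonneg (by linarith) (by linarith)
    exact le_max_of_le_right (by linarith)
  · refine le_max_of_le_left ?_
    rcases le_total (u + v) d with huv | huv
    · have : 0 ≤ c * (d - (u + v)) := mul_nonneg hc (by linarith)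
      linarith [mul_nonneg hu hv]
    · have : 0 ≤ (d - c) * (u + v - d) := mul_nonneg (by linarith) (by linarith)
      linarith

theorem add_add_mul_add_le_max_mul {p d u v s t b : ℕ} (hp : 0 < p) (hs : s + u ≤ d)
    (ht : t + v ≤ d) (hb : b + u * v ≤ d * d) :
    b + (s + t) + p * (u + v) ≤ max (p + d + 1) (2 * p) * d := by
  zify at *
  have hmax := mul_add_sub_mul_le_max (c := (p : ℤ) - 1) (by linarith) (by positivity)
    (by positivity) (show (u : ℤ) ≤ d by linarith) (show (v : ℤ) ≤ d by linarith)
  calc (b + (s + t) + p * (u + v) : ℤ)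
      ≤ ((p - 1) * (u + v) - u * v) + (d + 2) * d := by linarith
    _ ≤ max (((p : ℤ) - 1) * d) ((2 * (p - 1) - d) * d) + (d + 2) * d := by gcongr
    _ = max ((p : ℤ) + d + 1) (2 * p) * d := by
      rw [max_mul_of_nonneg _ _ (by positivity), max_add]
      ring_nf

theorem sum_mul_add_mul_add_mul_le {ι : Type*} (C : Finset ι) (s t : ι → ℕ) (u v : ℕ) :
    ∑ w ∈ C, (s w * t w + s w * v + u * t w) + u * v ≤
      (∑ w ∈ C, s w + u) * (∑ w ∈ C, t w + v) := by
  have hdiag : ∑ w ∈ C, s w * t w ≤ (∑ w ∈ C, s w) * ∑ w ∈ C, t w := by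
    rw [sum_mul]
    gcongr with w hw
    exact single_le_sum (fun _ _ => Nat.zero_le _) hw
  rw [sum_add_distrib, sum_add_distrib, ← sum_mul, ← mul_sum]
  linarith

theorem sum_mul_add_mul_add_mul_le_of_pos_on {ι : Type*} {C P : Finset ι}
    (hPC : P ⊆ C) {x z : ι → ℕ} {u v d : ℕ} (hx : ∀ w ∈ P, 0 < x w) (hz : ∀ w ∈ P, 0 < z w)
    (hxd : ∑ w ∈ C, x w + u ≤ #P + d) (hzd : ∑ w ∈ C, z w + v ≤ #P + d) :
    ∑ w ∈ C, (x w * z w + x w * v + u * z w) ≤ #P + max (#P + d + 1) (2 * #P) * d := by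
  classical
  have hind : ∑ w ∈ C, (if w ∈ P then 1 else 0) = #P := by
    rw [sum_ite_mem, inter_eq_right.2 hPC, card_eq_sum_ones]
  have hdecomp : ∀ {y : ι → ℕ}, (∀ w ∈ P, 0 < y w) →
      ∃ r : ι → ℕ, y = fun w => r w + if w ∈ P then 1 else 0 := fun {y} hy =>
    ⟨fun w => y w - if w ∈ P then 1 else 0, funext fun w => by
      have := hy w
      grind⟩
  obtain ⟨s, rfl⟩ := hdecomp hx
  obtain ⟨t, rfl⟩ := hdecomp hz
  rw [sum_add_distrib, hind] at hxd hzd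
  have hs : ∑ w ∈ C, s w + u ≤ d := by omega
  have ht : ∑ w ∈ C, t w + v ≤ d := by omega
  have hb := (sum_mul_add_mul_add_mul_le C s t u v).trans (Nat.mul_le_mul hs ht)
  rcases P.eq_empty_or_nonempty with rfl | hP
  · have hmax : d * d ≤ max (0 + d + 1) (2 * 0) * d :=
      Nat.mul_le_mul_right d (le_max_of_le_left (by omega))
    simp only [notMem_empty, if_false, add_zero, card_empty]
    omega
  · calc ∑ w ∈ C, ((s w + if w ∈ P then 1 else 0) * (t w + if w ∈ P then 1 else 0) +
            (s w + if w ∈ P then 1 else 0) * v + u * (t w + if w ∈ P then 1 else 0))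
        ≤ ∑ w ∈ C, ((s w * t w + s w * v + u * t w) + (s w + t w) +
            (if w ∈ P then 1 else 0) * (1 + (u + v))) := by
          refine sum_le_sum fun w _ => ?_
          split_ifs
          · linarith
          · linarith [Nat.zero_le (s w + t w)]
      _ = #P + (∑ w ∈ C, (s w * t w + s w * v + u * t w) +
            (∑ w ∈ C, s w + ∑ w ∈ C, t w) + #P * (u + v)) := by
          rw [sum_add_distrib, sum_add_distrib, ← sum_mul, hind, sum_add_distrib (f := s)]
          ring
      _ ≤ #P + max (#P + d + 1) (2 * #P) * d := by
          gcongr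
          exact add_add_mul_add_le_max_mul hP.card_pos hs ht hb

theorem sum_max_mul_lt {σ : Type*} [Fintype σ] {m : ℕ} {p d : σ → ℕ} (hsum : ∑ a, p a = m)
    (hpd : ∀ a, p a + d a < m) (hp : ∀ a, 2 * p a ≤ m + 2) (hm : 0 < m) :
    ∑ a, max m (2 * p a) * d a < m * (∑ a, d a + 1) := by
  classical
  rw [mul_add, mul_sum, mul_one]
  by_cases hall : ∀ a, 2 * p a ≤ m
  · simp only [max_eq_left (hall _)]
    omega
  · push Not at hall
    obtain ⟨a₀, ha₀⟩ := hall
    have hother : ∀ a ≠ a₀, 2 * p a ≤ m := fun a ha => by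
      have := add_le_sum (fun i _ => Nat.zero_le (p i)) (mem_univ a) (mem_univ a₀) ha
      omega
    have hd₀ : 2 * d a₀ < m := by have := hpd a₀; omega
    calc ∑ a, max m (2 * p a) * d a
        ≤ ∑ a, (m * d a + if a = a₀ then 2 * d a₀ else 0) := by
          gcongr with a
          split_ifs with ha
          · subst ha
            rw [← add_mul]
            gcongr
            exact max_le (by omega) (hp a)
          · rw [max_eq_left (hother a ha), add_zero]
      _ = ∑ a, m * d a + 2 * d a₀ := by
          rw [sum_add_distrib, sum_ite_eq' univ a₀, if_pos (mem_univ a₀)]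
      _ < ∑ a, m * d a + m := by gcongr

end Arithmetic

section Fibers

theorem two_le_card_add_card_filter_subset_singleton {ι : Type*} [Fintype ι] [DecidableEq ι]
    [Nontrivial ι] (U : Finset ι) : 2 ≤ #U + #{l | U ⊆ {l}} := by
  rcases Nat.lt_or_ge #U 2 with hU | hU
  · rcases Nat.lt_or_ge #U 1 with hU' | hU'
    · obtain rfl : U = ∅ := card_eq_zero.1 (by omega)
      simp only [empty_subset, filter_true, card_empty, zero_add, card_univ]
      exact Fintype.one_lt_card
    · obtain ⟨l, rfl⟩ := card_eq_one.1 (show #U = 1 by omega)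
      have : 0 < #{l' | {l} ⊆ ({l'} : Finset ι)} := card_pos.2 ⟨l, by simp⟩
      omega
  · omega

theorem exists_forall_two_mul_card_le_mul_card_ne {ι V σ : Type*} [Fintype ι] [Nontrivial ι]
    [DecidableEq σ] {C : Finset V} {z : ι → V → σ}
    (hz : ∀ l, ∀ w ∈ C, ∀ w' ∈ C, (∀ i ≠ l, z i w = z i w') → w = w') :
    ∃ i, ∀ a, 2 * #C ≤ Fintype.card ι * (#{w ∈ C | z i w ≠ a} + 1) := by
  classical
  by_contra! hcon
  choose a ha using hcon
  set U : V → Finset ι := fun w => {i | z i w ≠ a i}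
  have hmem : ∀ {w l i}, U w ⊆ {l} → i ≠ l → z i w = a i := fun {w l i} hU hi => by
    by_contra hne
    exact hi (mem_singleton.1 (hU (mem_filter.2 ⟨mem_univ i, hne⟩)))
  have hone : ∀ l, #{w ∈ C | U w ⊆ {l}} ≤ 1 := fun l => card_le_one.2 fun w hw w' hw' => by
    rw [mem_filter] at hw hw'
    exact hz l w hw.1 w' hw'.1 fun i hi => (hmem hw.2 hi).trans (hmem hw'.2 hi).symm
  have hcount : 2 * #C ≤ ∑ i, (#{w ∈ C | z i w ≠ a i} + 1) :=
    calc 2 * #C = ∑ w ∈ C, 2 := by rw [sum_const, smul_eq_mul, mul_comm]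
      _ ≤ ∑ w ∈ C, (#(U w) + #{l | U w ⊆ {l}}) :=
        sum_le_sum fun w _ => two_le_card_add_card_filter_subset_singleton (U w)
      _ = ∑ i, #{w ∈ C | z i w ≠ a i} + ∑ l, #{w ∈ C | U w ⊆ {l}} := by
        rw [sum_add_distrib]
        congr 1 <;> exact sum_card_bipartiteAbove_eq_sum_card_bipartiteBelow _
      _ ≤ ∑ i, (#{w ∈ C | z i w ≠ a i} + 1) := by
        rw [sum_add_distrib]
        gcongr with l
        exact hone l
  have hlt : Fintype.card ι * ∑ i, (#{w ∈ C | z i w ≠ a i} + 1) < Fintype.card ι * (2 * #C) := by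
    rw [mul_sum]
    simpa using sum_lt_sum_of_nonempty (univ_nonempty (α := ι)) fun i _ => ha i
  exact (Nat.lt_of_mul_lt_mul_left hlt).not_ge hcount

end Fibers

section Counting

variable {V σ : Type*} [Fintype σ] [DecidableEq V]

theorem card_filter_mem_add_card_filter_mem_add_card_le {φ : σ → V} {C E J : Finset V}
    (hCE : Disjoint C E) (hJ : Disjoint (C ∪ E) J) (hJφ : J ⊆ univ.image φ) :
    #{b | φ b ∈ C} + #{b | φ b ∈ E} + #J ≤ Fintype.card σ := by
  classical
  have hJcard : #J ≤ #{b | φ b ∈ J} := by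
    refine (card_le_card fun v hv => ?_).trans (card_image_le (f := φ))
    obtain ⟨b, -, rfl⟩ := mem_image.1 (hJφ hv)
    exact mem_image_of_mem φ (mem_filter.2 ⟨mem_univ b, hv⟩)
  calc #{b | φ b ∈ C} + #{b | φ b ∈ E} + #J
      ≤ #{b | φ b ∈ C} + #{b | φ b ∈ E} + #{b | φ b ∈ J} := by gcongr
    _ = #{b | φ b ∈ C ∪ E ∪ J} := by
      simp only [← sum_card_fiberwise_eq_card_filter]
      rw [sum_union hJ, sum_union hCE]
    _ ≤ Fintype.card σ := card_le_univ _

/-- The values outside `C` that both of the decoders `φ` and `γ` can output. -/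
def commonOutputs (φ γ : σ → V) (C : Finset V) : Finset V :=
  (univ.image φ ∩ univ.image γ) \ C

theorem disjoint_commonOutputs (φ γ : σ → V) (C : Finset V) :
    Disjoint C (commonOutputs φ γ C) :=
  disjoint_sdiff

theorem commonOutputs_subset_left (φ γ : σ → V) (C : Finset V) :
    commonOutputs φ γ C ⊆ univ.image φ :=
  sdiff_subset.trans inter_subset_left

theorem commonOutputs_subset_right (φ γ : σ → V) (C : Finset V) :
    commonOutputs φ γ C ⊆ univ.image γ :=
  sdiff_subset.trans inter_subset_right

theorem card_add_card_commonOutputs_le {φ γ : σ → V} {C P : Finset V} (hPC : P ⊆ C)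
    (hPφ : P ⊆ univ.image φ) : #P + #(commonOutputs φ γ C) ≤ Fintype.card σ := by
  rw [← card_union_of_disjoint ((disjoint_commonOutputs φ γ C).mono_left hPC)]
  exact (card_le_card (union_subset hPφ (commonOutputs_subset_left φ γ C))).trans card_image_le

/-- The pairs of symbols `(b, c)` that two decoders `φ` and `γ` can see when the true versions are
`w` and some `v` in `E ∪ {w}`, each decoder outputs one of them, and no `v ∈ E` is an output of
both. -/
def consistentPairs (φ γ : σ → V) (E : Finset V) (w : V) : Finset (σ × σ) :=
  {x | φ x.1 = w ∧ γ x.2 = w ∨ φ x.1 = w ∧ γ x.2 ∈ E ∨ φ x.1 ∈ E ∧ γ x.2 = w}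

theorem card_consistentPairs_le (φ γ : σ → V) (E : Finset V) (w : V) :
    #(consistentPairs φ γ E w) ≤ #{b | φ b = w} * #{c | γ c = w} +
      #{b | φ b = w} * #{c | γ c ∈ E} + #{b | φ b ∈ E} * #{c | γ c = w} := by
  classical
  simp only [consistentPairs, filter_or, ← card_product, ← filter_product, univ_product_univ,
    ← union_assoc]
  exact (card_union_le _ _).trans (Nat.add_le_add_right (card_union_le _ _) _)

theorem sum_card_consistentPairs_le {φ γ : σ → V} {C E P : Finset V} {d : ℕ}
    (hCE : Disjoint C E) (hE : Disjoint E (commonOutputs φ γ C)) (hPC : P ⊆ C)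
    (hPφ : P ⊆ univ.image φ) (hPγ : P ⊆ univ.image γ)
    (hd : #P + d + #(commonOutputs φ γ C) = Fintype.card σ) :
    ∑ w ∈ C, #(consistentPairs φ γ E w) ≤ #P + max (Fintype.card σ + 1) (2 * #P) * d := by
  have hbudget : ∀ {η : σ → V}, commonOutputs φ γ C ⊆ univ.image η →
      ∑ w ∈ C, #{b | η b = w} + #{b | η b ∈ E} ≤ #P + d := fun {η} hη => by
    have := card_filter_mem_add_card_filter_mem_add_card_le hCE
      (disjoint_union_left.2 ⟨disjoint_commonOutputs φ γ C, hE⟩) hη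
    rw [sum_card_fiberwise_eq_card_filter]
    omega
  have hpos : ∀ {η : σ → V}, P ⊆ univ.image η → ∀ w ∈ P, 0 < #{b | η b = w} :=
    fun {η} hη w hw => by
      obtain ⟨b, hb, hbw⟩ := mem_image.1 (hη hw)
      exact card_pos.2 ⟨b, mem_filter.2 ⟨hb, hbw⟩⟩
  calc ∑ w ∈ C, #(consistentPairs φ γ E w)
      ≤ ∑ w ∈ C, (#{b | φ b = w} * #{c | γ c = w} +
          #{b | φ b = w} * #{c | γ c ∈ E} + #{b | φ b ∈ E} * #{c | γ c = w}) :=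
        sum_le_sum fun w _ => card_consistentPairs_le φ γ E w
    _ ≤ #P + max (#P + d + 1) (2 * #P) * d :=
        sum_mul_add_mul_add_mul_le_of_pos_on hPC (hpos hPφ) (hpos hPγ)
          (hbudget (commonOutputs_subset_left φ γ C)) (hbudget (commonOutputs_subset_right φ γ C))
    _ ≤ #P + max (Fintype.card σ + 1) (2 * #P) * d := by gcongr; omega

theorem card_add_one_le_sum_card_consistentPairs {y₁ y₂ y₃ : V → σ} {f g : σ → σ → V} {w : V}
    {C E : Finset V} (hf : ∀ v, f (y₁ v) (y₂ v) = w ∨ f (y₁ v) (y₂ v) = v)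
    (hg : ∀ v, g (y₁ v) (y₃ v) = w ∨ g (y₁ v) (y₃ v) = v)
    (hinj : ∀ v v', y₁ v = y₁ v' → y₂ v = y₂ v' → y₃ v = y₃ v' → v = v') (hw : w ∈ C)
    (hCE : Disjoint C E) (hE : ∀ a, Disjoint E (commonOutputs (f a) (g a) C)) :
    #E + 1 ≤ ∑ a, #(consistentPairs (f a) (g a) E w) := by
  rw [← card_insert_of_notMem (disjoint_left.1 hCE hw), ← card_sigma]
  refine card_le_card_of_injOn (fun v => ⟨y₁ v, y₂ v, y₃ v⟩) (fun v hv => ?_)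
    fun v _ v' _ hvv' => ?_
  · have hnot : v ∈ E → ¬(f (y₁ v) (y₂ v) = v ∧ g (y₁ v) (y₃ v) = v) := fun hvE h =>
      disjoint_left.1 (hE (y₁ v)) hvE (mem_sdiff.2 ⟨mem_inter.2
        ⟨mem_image.2 ⟨_, mem_univ _, h.1⟩, mem_image.2 ⟨_, mem_univ _, h.2⟩⟩,
        disjoint_right.1 hCE hvE⟩)
    simp only [coe_sigma, Set.mem_sigma_iff, mem_coe, mem_univ, true_and, consistentPairs,
      mem_filter]
    rcases mem_insert.1 hv with rfl | hvE
    · exact .inl ⟨or_self_iff.1 (hf v), or_self_iff.1 (hg v)⟩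
    · rcases hf v with hfv | hfv <;> rcases hg v with hgv | hgv
      · exact .inl ⟨hfv, hgv⟩
      · exact .inr (.inl ⟨hfv, hgv.symm ▸ hvE⟩)
      · exact .inr (.inr ⟨hfv.symm ▸ hvE, hgv⟩)
      · exact absurd ⟨hfv, hgv⟩ (hnot hvE)
  · simp only [Sigma.mk.injEq, heq_eq_eq, Prod.mk.injEq] at hvv'
    exact hinj v v' hvv'.1 hvv'.2.1 hvv'.2.2

variable [DecidableEq σ]

theorem filter_diag_subset_image {C : Finset V} {y₁ y₂ : V → V → σ} {f : σ → σ → V}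
    (hf : ∀ w ∈ C, ∀ v, f (y₁ w v) (y₂ w v) = w ∨ f (y₁ w v) (y₂ w v) = v) (a : σ) :
    ({w ∈ C | y₁ w w = a} : Finset V) ⊆ univ.image (f a) := fun w hw => by
  obtain ⟨hwC, rfl⟩ := mem_filter.1 hw
  exact mem_image.2 ⟨y₂ w w, mem_univ _, or_self_iff.1 (hf w hwC w)⟩

theorem card_mul_card_add_one_le {C E : Finset V} {y₁ y₂ y₃ : V → V → σ} {f g : σ → σ → V}
    {d : σ → ℕ} (hf : ∀ w ∈ C, ∀ v, f (y₁ w v) (y₂ w v) = w ∨ f (y₁ w v) (y₂ w v) = v)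
    (hg : ∀ w ∈ C, ∀ v, g (y₁ w v) (y₃ w v) = w ∨ g (y₁ w v) (y₃ w v) = v)
    (hinj : ∀ w ∈ C, ∀ v v', y₁ w v = y₁ w v' → y₂ w v = y₂ w v' → y₃ w v = y₃ w v' → v = v')
    (hCE : Disjoint C E) (hE : ∀ a, Disjoint E (commonOutputs (f a) (g a) C))
    (hd : ∀ a, #{w ∈ C | y₁ w w = a} + d a + #(commonOutputs (f a) (g a) C) = Fintype.card σ) :
    #C * (#E + 1) ≤ #C + ∑ a, max (Fintype.card σ + 1) (2 * #{w ∈ C | y₁ w w = a}) * d a :=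
  calc #C * (#E + 1) = ∑ w ∈ C, (#E + 1) := by rw [sum_const, smul_eq_mul]
    _ ≤ ∑ w ∈ C, ∑ a, #(consistentPairs (f a) (g a) E w) := sum_le_sum fun w hw =>
      card_add_one_le_sum_card_consistentPairs (hf w hw) (hg w hw) (hinj w hw) hw hCE hE
    _ = ∑ a, ∑ w ∈ C, #(consistentPairs (f a) (g a) E w) := sum_comm
    _ ≤ ∑ a, (#{w ∈ C | y₁ w w = a} +
          max (Fintype.card σ + 1) (2 * #{w ∈ C | y₁ w w = a}) * d a) := sum_le_sum fun a _ =>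
      sum_card_consistentPairs_le hCE (hE a) (filter_subset _ C) (filter_diag_subset_image hf a)
        (filter_diag_subset_image hg a) (hd a)
    _ = #C + ∑ a, max (Fintype.card σ + 1) (2 * #{w ∈ C | y₁ w w = a}) * d a := by
      rw [sum_add_distrib, ← card_eq_sum_card_fiberwise fun w _ => mem_univ (y₁ w w)]

end Counting

theorem card_le_sq_of_forall_two_mul_card_le {V σ : Type*} [Fintype V] [Fintype σ] [DecidableEq σ]
    {C : Finset V} (hC : #C = Fintype.card σ + 1) {y₁ y₂ y₃ : V → V → σ} {f g : σ → σ → V}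
    (hf : ∀ w ∈ C, ∀ v, f (y₁ w v) (y₂ w v) = w ∨ f (y₁ w v) (y₂ w v) = v)
    (hg : ∀ w ∈ C, ∀ v, g (y₁ w v) (y₃ w v) = w ∨ g (y₁ w v) (y₃ w v) = v)
    (hinj : ∀ w ∈ C, ∀ v v', y₁ w v = y₁ w v' → y₂ w v = y₂ w v' → y₃ w v = y₃ w v' → v = v')
    (hbal : ∀ a, 2 * #{w ∈ C | y₁ w w = a} ≤ #C + 2) :
    Fintype.card V ≤ Fintype.card σ ^ 2 := by
  classical
  let P : σ → Finset V := fun a => {w ∈ C | y₁ w w = a}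
  let J : σ → Finset V := fun a => commonOutputs (f a) (g a) C
  let E : Finset V := (C ∪ univ.biUnion J)ᶜ
  have hCE : Disjoint C E := disjoint_compl_right.mono_left subset_union_left
  have hE : ∀ a, Disjoint E (J a) := fun a => disjoint_compl_left.mono_right
    ((subset_biUnion_of_mem J (mem_univ a)).trans subset_union_right)
  obtain ⟨d, hd⟩ : ∃ d : σ → ℕ, ∀ a, #(P a) + d a + #(J a) = Fintype.card σ := by
    choose d hd using fun a => Nat.exists_eq_add_of_le <| card_add_card_commonOutputs_le (γ := g a)
      (filter_subset _ C) (filter_diag_subset_image hf a)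
    exact ⟨d, fun a => by rw [hd a, add_right_comm]⟩
  have hsumP : ∑ a, #(P a) = #C := (card_eq_sum_card_fiberwise fun w _ => mem_univ (y₁ w w)).symm
  have hcount := card_mul_card_add_one_le hf hg hinj hCE hE hd
  have hexcess : ∑ a, max #C (2 * #(P a)) * d a < #C * (∑ a, d a + 1) :=
    sum_max_mul_lt hsumP (fun a => by have := hd a; omega) hbal (by omega)
  have hEd : #E ≤ ∑ a, d a := by
    rw [← hC] at hcount
    have : #C * (#E + 1) < #C * (∑ a, d a + 2) := by linarith
    have := Nat.lt_of_mul_lt_mul_left this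
    omega
  calc Fintype.card V = #(C ∪ univ.biUnion J) + #E := (card_add_card_compl _).symm
    _ ≤ (#C + ∑ a, #(J a)) + ∑ a, d a := by
      gcongr
      exact (card_union_le _ _).trans (Nat.add_le_add_left card_biUnion_le _)
    _ = ∑ a, (#(P a) + d a + #(J a)) := by
      rw [sum_add_distrib, sum_add_distrib, hsumP, add_right_comm]
    _ = Fintype.card σ ^ 2 := by simp only [hd, sum_const, smul_eq_mul, card_univ, sq]

/-- Servers `i` store a symbol `y i w v` when the versions have values `w` and `v`. For `w ∈ C`, the
symbols of two distinct servers reveal one of `w` and `v`, and those of three reveal `v`. -/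
structure PairTripleDecodable {ι V σ : Type*} (C : Finset V) (y : ι → V → V → σ) : Prop where
  pair : ∀ {i j}, i ≠ j → ∃ f : σ → σ → V, ∀ w ∈ C, ∀ v,
    f (y i w v) (y j w v) = w ∨ f (y i w v) (y j w v) = v
  triple : ∀ {i j k}, i ≠ j → i ≠ k → j ≠ k → ∀ w ∈ C, ∀ w' ∈ C, ∀ v v',
    y i w v = y i w' v' → y j w v = y j w' v' → y k w v = y k w' v' → v = v'

namespace PairTripleDecodable

variable {ι V σ : Type*} {C : Finset V}

theorem comp_injective {κ : Type*} {y : ι → V → V → σ} (hy : PairTripleDecodable C y) {e : κ → ι}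
    (he : e.Injective) : PairTripleDecodable C (y ∘ e) where
  pair hij := hy.pair (he.ne hij)
  triple hij hik hjk := hy.triple (he.ne hij) (he.ne hik) (he.ne hjk)

theorem exists_forall_two_mul_card_le [DecidableEq σ] {y : Fin 4 → V → V → σ}
    (hy : PairTripleDecodable C y) : ∃ i, ∀ a, 2 * #{w ∈ C | y i w w = a} ≤ #C + 2 := by
  have hthree : ∀ l : Fin 4, ∃ i j k, i ≠ j ∧ i ≠ k ∧ j ≠ k ∧ i ≠ l ∧ j ≠ l ∧ k ≠ l := by decide
  obtain ⟨i, hi⟩ := exists_forall_two_mul_card_le_mul_card_ne (C := C) (z := fun i w => y i w w)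
    fun l w hw w' hw' hww' => by
      obtain ⟨i, j, k, hij, hik, hjk, hil, hjl, hkl⟩ := hthree l
      exact hy.triple hij hik hjk w hw w' hw' w w' (hww' i hil) (hww' j hjl) (hww' k hkl)
  refine ⟨i, fun a => ?_⟩
  have hsplit : #{w ∈ C | y i w w = a} + #{w ∈ C | y i w w ≠ a} = #C :=
    card_filter_add_card_filter_not _
  have hbal := hi a
  rw [Fintype.card_fin] at hbal
  omega

theorem card_le_sq [Fintype ι] [Fintype V] [Fintype σ] {y : ι → V → V → σ}
    (hy : PairTripleDecodable C y) (hι : 4 ≤ Fintype.card ι) (hC : #C = Fintype.card σ + 1) :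
    Fintype.card V ≤ Fintype.card σ ^ 2 := by
  classical
  obtain ⟨e⟩ : Nonempty (Fin 4 ↪ ι) :=
    Function.Embedding.nonempty_of_card_le (by rwa [Fintype.card_fin])
  have hye := hy.comp_injective e.injective
  obtain ⟨i, hi⟩ := hye.exists_forall_two_mul_card_le
  obtain ⟨j, k, hij, hik, hjk⟩ : ∃ j k, i ≠ j ∧ i ≠ k ∧ j ≠ k := by
    clear hi
    decide +revert
  obtain ⟨f, hf⟩ := hye.pair hij
  obtain ⟨g, hg⟩ := hye.pair hik
  exact card_le_sq_of_forall_two_mul_card_le hC hf hg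
    (fun w hw v v' => hye.triple hij hik hjk w hw w hw v v') hi

end PairTripleDecodable

theorem mem_nbhd_iff {n h : ℕ} {i j : ZMod n} :
    j ∈ nbhd n h i ↔ ∃ d : ℤ, -h ≤ d ∧ d ≤ h ∧ i + d = j := by
  simp only [nbhd, mem_image, mem_Icc, and_assoc]

theorem self_mem_nbhd (n h : ℕ) (i : ZMod n) : i ∈ nbhd n h i :=
  mem_nbhd_iff.2 ⟨0, by simp⟩

theorem mem_nbhd_comm {n h : ℕ} {i j : ZMod n} : j ∈ nbhd n h i ↔ i ∈ nbhd n h j := by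
  have hsymm : ∀ {i j : ZMod n}, j ∈ nbhd n h i → i ∈ nbhd n h j := fun {i j} hij => by
    obtain ⟨d, hd₁, hd₂, rfl⟩ := mem_nbhd_iff.1 hij
    exact mem_nbhd_iff.2 ⟨-d, by omega, by omega, by push_cast; ring⟩
  exact ⟨hsymm, hsymm⟩

theorem card_nbhd_le (n h : ℕ) (i : ZMod n) : #(nbhd n h i) ≤ 2 * h + 1 := by
  refine card_image_le.trans ?_
  rw [Int.card_Icc]
  omega

theorem exists_card_eq_forall_notMem_nbhd {n h k : ℕ} [NeZero n] (i₀ : ZMod n)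
    (hk : k + (2 * h + 1) ≤ n) : ∃ F : Finset (ZMod n), #F = k ∧ ∀ i ∈ F, i₀ ∉ nbhd n h i := by
  have hfar : k ≤ #(nbhd n h i₀)ᶜ := by
    have := card_nbhd_le n h i₀
    rw [card_compl, ZMod.card]
    omega
  obtain ⟨F, hFsub, hF⟩ := exists_subset_card_eq hfar
  exact ⟨F, hF, fun i hi hi₀ => mem_compl.1 (hFsub hi) (mem_nbhd_comm.1 hi₀)⟩

namespace MVCode

variable {n cW cR ν h K q : ℕ} [NeZero n]

theorem exists_decoder (code : MVCode n cW cR ν h K q) {S : ZMod n → Finset (Fin ν)}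
    {R : Finset (ZMod n)} (hR : cR ≤ #(R ∪ ({i | S i = ∅} : Finset (ZMod n)))) {u : Fin ν}
    (hu : cW ≤ #(received n ν S u)) :
    ∃ D : (ZMod n → Fin q) → Option (Fin K → Bool),
      (∀ X X', (∀ i ∈ R, X i = X' i) → D X = D X') ∧
      ∀ W, ∃ m, u ≤ m ∧ D (fun i => code.enc i S W) = some (W m) := by
  classical
  obtain ⟨T, hTR, hT⟩ := exists_subset_card_eq hR
  refine ⟨fun X => code.dec S T fun i => if i ∈ R then X i else code.enc i S fun _ _ => false,
    fun X X' hX => ?_, fun W => ?_⟩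
  · refine code.dec_local S T _ _ fun i _ => ?_
    split_ifs with hi
    · exact hX i hi
    · rfl
  · obtain ⟨m, hm, hdec⟩ := code.dec_correct S W T hT ⟨u, hu⟩
    refine ⟨m, hm u hu, (code.dec_local S T _ _ fun i hi => ?_).trans hdec⟩
    split_ifs with hiR
    · rfl
    · have hSi : S i = ∅ := (mem_filter.1 ((mem_union.1 (hTR hi)).resolve_left hiR)).2
      exact code.enc_local_word i S _ W (by simp [hSi])

end MVCode

/-- The state in which the servers of `A` received version `0`, those of `B` received version `1`,
and no server received any other version. -/
def pairState (ν : ℕ) {n : ℕ} (A B : Finset (ZMod n)) (i : ZMod n) : Finset (Fin (ν + 2)) :=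
  {u | u = 0 ∧ i ∈ A ∨ u = 1 ∧ i ∈ B}

/-- Version values with `w` for version `0` and `v` for all later versions, so that any decoded
version later than `0` has value `v`. -/
def pairValues (ν : ℕ) {α : Type*} (w v : α) (u : Fin (ν + 2)) : α :=
  if u = 0 then w else v

section PairState

variable {n ν : ℕ} {A B : Finset (ZMod n)} {i : ZMod n}

@[simp]
theorem mem_pairState {u : Fin (ν + 2)} :
    u ∈ pairState ν A B i ↔ u = 0 ∧ i ∈ A ∨ u = 1 ∧ i ∈ B := by
  simp only [pairState, mem_filter, mem_univ, true_and]

theorem received_pairState_zero [NeZero n] : received n (ν + 2) (pairState ν A B) 0 = A := by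
  ext i
  simp [received]

theorem received_pairState_one [NeZero n] : received n (ν + 2) (pairState ν A B) 1 = B := by
  ext i
  simp [received]

theorem pairState_eq_empty (hBA : B ⊆ A) (hi : i ∉ A) : pairState ν A B i = ∅ := by
  ext u
  simp [hi, notMem_mono hBA hi]

theorem card_le_card_union_filter_pairState_eq_empty [NeZero n] {R : Finset (ZMod n)}
    (hBA : B ⊆ A) (hRA : R ⊆ A) :
    n + #R ≤ #(R ∪ ({i | pairState ν A B i = ∅} : Finset (ZMod n))) + #A := by
  classical
  have hdisj : Disjoint R Aᶜ := disjoint_compl_right.mono_left hRA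
  have hcompl := card_add_card_compl A
  rw [ZMod.card] at hcompl
  have hsub : R ∪ Aᶜ ⊆ R ∪ ({i | pairState ν A B i = ∅} : Finset (ZMod n)) :=
    union_subset_union_right fun i hi =>
      mem_filter.2 ⟨mem_univ i, pairState_eq_empty hBA (mem_compl.1 hi)⟩
  have := card_le_card hsub
  rw [card_union_of_disjoint hdisj] at this
  omega

end PairState

namespace MVCode

variable {n cW cR ν h K q : ℕ} [NeZero n]

theorem exists_pair_decoder (code : MVCode n cW cR (ν + 2) h K q) (hc : cW + cR ≤ n + 3)
    {F : Finset (ZMod n)} (h0 : 0 ∉ F) (hF : #F + 1 = cW) {C : Finset (Fin K → Bool)} {b : Fin q}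
    (hb : ∀ w ∈ C, ∀ v, code.enc 0 (pairState ν (insert 0 F) F) (pairValues ν w v) = b)
    {i j : ZMod n} (hi : i ∈ F) (hj : j ∈ F) (hij : i ≠ j) :
    ∃ f : Fin q → Fin q → Fin K → Bool, ∀ w ∈ C, ∀ v,
      let x := fun k => code.enc k (pairState ν (insert 0 F) F) (pairValues ν w v)
      f (x i) (x j) = w ∨ f (x i) (x j) = v := by
  have hR : #{0, i, j} = 3 := card_eq_three.2
    ⟨0, i, j, fun h => h0 (h ▸ hi), fun h => h0 (h ▸ hj), hij, rfl⟩
  have hRA : {0, i, j} ⊆ insert 0 F := by grind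
  have hcard := card_le_card_union_filter_pairState_eq_empty (ν := ν) (subset_insert 0 F) hRA
  rw [hR, card_insert_of_notMem h0] at hcard
  obtain ⟨D, hD, hdec⟩ := code.exists_decoder (u := 0) (S := pairState ν (insert 0 F) F)
    (R := {0, i, j}) (by omega) (by rw [received_pairState_zero, card_insert_of_notMem h0, hF])
  refine ⟨fun a c => (D fun k => if k = i then a else if k = j then c else b).getD fun _ => false,
    fun w hw v => ?_⟩
  obtain ⟨m, -, hm⟩ := hdec (pairValues ν w v)
  intro x
  have hx : (D fun k => if k = i then x i else if k = j then x j else b) =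
      some (pairValues ν w v m) :=
    (hD _ _ fun k hk => by have := hb w hw v; grind).trans hm
  simp only [hx, Option.getD_some]
  exact ite_eq_or_eq _ w v

theorem eq_of_enc_eq (code : MVCode n cW cR (ν + 2) h K q) (hc : cW + cR ≤ n + 3)
    {A R : Finset (ZMod n)} (hA : #A = cW) (hRA : R ⊆ A) (hR : #R = 3) {w w' v v' : Fin K → Bool}
    (heq : ∀ i ∈ R, code.enc i (pairState ν A A) (pairValues ν w v) =
      code.enc i (pairState ν A A) (pairValues ν w' v')) : v = v' := by
  have hcard := card_le_card_union_filter_pairState_eq_empty (ν := ν) subset_rfl hRA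
  obtain ⟨D, hD, hdec⟩ := code.exists_decoder (u := 1) (S := pairState ν A A) (R := R) (by omega)
    (by rw [received_pairState_one, hA])
  have hlatest : ∀ w v, D (fun i => code.enc i (pairState ν A A) (pairValues ν w v)) = some v :=
    fun w v => by
      obtain ⟨m, hm, hDm⟩ := hdec (pairValues ν w v)
      rwa [pairValues, if_neg (Fin.pos_iff_ne_zero.1 (Fin.zero_lt_one.trans_le hm))] at hDm
  exact Option.some_injective _ ((hlatest w v).symm.trans ((hD _ _ heq).trans (hlatest w' v')))

theorem enc_pairState_insert (code : MVCode n cW cR (ν + 2) h K q) {F : Finset (ZMod n)}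
    (A : Finset (ZMod n)) {i₀ i : ZMod n} (hi : i₀ ∉ nbhd n h i) (W : Fin (ν + 2) → Fin K → Bool) :
    code.enc i (pairState ν A F) W = code.enc i (pairState ν A (insert i₀ F)) W := by
  refine code.enc_local_state i _ _ W fun j hj => ?_
  have hj₀ : j ≠ i₀ := fun h => hi (h ▸ hj)
  ext u
  simp only [mem_pairState, mem_insert, hj₀, false_or]

theorem exists_card_eq_forall_enc_eq (code : MVCode n cW cR ν h K q) (hq : q ^ 2 < 2 ^ K)
    {S : ZMod n → Finset (Fin ν)} (i : ZMod n) (W : (Fin K → Bool) → Fin ν → Fin K → Bool) :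
    ∃ C : Finset (Fin K → Bool), #C = q + 1 ∧ ∃ b, ∀ w ∈ C, code.enc i S (W w) = b := by
  obtain ⟨b, -, hb⟩ := exists_lt_card_fiber_of_mul_lt_card_of_maps_to (n := q)
    (f := fun w => code.enc i S (W w)) (s := univ) (t := univ) (fun _ _ => mem_univ _)
    (by simpa [← sq] using hq)
  obtain ⟨C, hCb, hC⟩ := exists_subset_card_eq (Nat.succ_le_of_lt hb)
  exact ⟨C, hC, b, fun w hw => (mem_filter.1 (hCb hw)).2⟩

theorem exists_pairTripleDecodable (code : MVCode n cW cR (ν + 2) h K q) (hc : cW + cR ≤ n + 3)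
    {F : Finset (ZMod n)} (hF : #F + 1 = cW) (hfar : ∀ i ∈ F, 0 ∉ nbhd n h i)
    (hq : q ^ 2 < 2 ^ K) :
    ∃ C : Finset (Fin K → Bool), #C = q + 1 ∧
      PairTripleDecodable C fun (i : F) w v =>
        code.enc i (pairState ν (insert 0 F) F) (pairValues ν w v) := by
  have h0 : (0 : ZMod n) ∉ F := fun h0 => hfar 0 h0 (self_mem_nbhd n h 0)
  obtain ⟨C, hC, b, hb⟩ := code.exists_card_eq_forall_enc_eq (S := pairState ν (insert 0 F) F) hq 0
    fun w => pairValues ν w w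
  have hb : ∀ w ∈ C, ∀ v, code.enc 0 (pairState ν (insert 0 F) F) (pairValues ν w v) = b :=
    fun w hw v => (code.enc_local_word 0 _ _ _ fun u hu => by
      obtain rfl : u = 0 := by simpa [h0] using hu
      rfl).trans (hb w hw)
  refine ⟨C, hC, ⟨fun {i j} hij => ?_, fun {i j k} hij hik hjk w _ w' _ v v' hi hj hk => ?_⟩⟩
  · exact code.exists_pair_decoder hc h0 hF hb i.2 j.2 (Subtype.coe_ne_coe.2 hij)
  · have hsub : ({↑i, ↑j, ↑k} : Finset (ZMod n)) ⊆ F := by simp [insert_subset_iff]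
    refine code.eq_of_enc_eq hc (by rw [card_insert_of_notMem h0, hF])
      (hsub.trans (subset_insert 0 F)) (w := w) (w' := w') (card_eq_three.2 ⟨i, j, k,
        Subtype.coe_ne_coe.2 hij, Subtype.coe_ne_coe.2 hik, Subtype.coe_ne_coe.2 hjk, rfl⟩)
      fun l hl => ?_
    simp only [← code.enc_pairState_insert _ (hfar l (hsub hl))]
    simp only [mem_insert, mem_singleton] at hl
    rcases hl with rfl | rfl | rfl
    exacts [hi, hj, hk]

end MVCode

theorem converse_side_info_may_not_help_general {n cW cR ν h K q : ℕ} [NeZero n] (hcW : 5 ≤ cW)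
    (hc : cW + cR ≤ n + 3) (hh : cW + 2 * h ≤ n) (code : MVCode n cW cR (ν + 2) h K q) :
    2 ^ K ≤ q ^ 2 := by
  by_contra! hq
  obtain ⟨F, hF, hfar⟩ := exists_card_eq_forall_notMem_nbhd (n := n) (h := h) (k := cW - 1) 0
    (by omega)
  obtain ⟨C, hC, hdec⟩ := code.exists_pairTripleDecodable hc (by omega) hfar hq
  have hcard := hdec.card_le_sq (by rw [Fintype.card_coe]; omega) (by rw [hC, Fintype.card_fin])
  simp only [Fintype.card_fun, Fintype.card_bool, Fintype.card_fin] at hcard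
  exact hq.not_ge hcard

/-- Corollary 1: for `n ≥ 11` with `n ≡ 3 (mod 4)`, `ν = 2`,
`c_W = c_R = (n+3)/2` (so `c = 3`) and `h ≤ (n-3)/4`, every
`(n, (n+3)/2, (n+3)/2, 2, h, 2^K, q)` multi-version code with side information
satisfies `q² ≥ 2^K`, i.e. its storage cost satisfies `log₂ q ≥ K/2`. -/
theorem converse_side_info_may_not_help (n h K q : ℕ) [NeZero n]
    (hn : 11 ≤ n) (hmod : n % 4 = 3)
    (hh0 : 0 < h) (hh : h ≤ (n - 3) / 4) (h2h : 2 * h + 1 ≤ n)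
    (hK : 0 < K) (hq : 0 < q)
    (code : MVCode n ((n + 3) / 2) ((n + 3) / 2) 2 h K q) :
    2 ^ K ≤ q ^ 2 :=
  converse_side_info_may_not_help_general (by omega) (by omega) (by omega) code
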